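/- Let n ≥ 3, let Γ be an access structure on n players satisfying monotonicity, no-cloning and no-redundancy, and let ψ be a pure QSS state for Γ. Then for every minimal authorized set A ∈ Γ_min and every subset B ⊆ A, we have S(B) = |B|·log 2; equivalently, the reduction of ψ to B equals 2^{−|B|}·I. -/

import Mathlib

open Finset

/-- Monotonicity of an access structure on `n` players (players = `Fin n`). -/
def Monotonic {n : ℕ} (Γ : Finset (Fin n) → Prop) : Prop :=
  ∀ A B : Finset (Fin n), Γ A → A ⊆ B → Γ B

/-- No-cloning: a set is authorized iff its complement is not. -/
def NoCloning {n : ℕ} (Γ : Finset (Fin n) → Prop) : Prop :=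
  ∀ A : Finset (Fin n), Γ A ↔ ¬ Γ Aᶜ

/-- `A` is a minimal authorized set of `Γ`. -/
def IsMinimal {n : ℕ} (Γ : Finset (Fin n) → Prop) (A : Finset (Fin n)) : Prop :=
  Γ A ∧ ∀ B : Finset (Fin n), B ⊂ A → ¬ Γ B

/-- No-redundancy: every player lies in some minimal authorized set. -/
def NoRedundancy {n : ℕ} (Γ : Finset (Fin n) → Prop) : Prop :=
  ∀ i : Fin n, ∃ A : Finset (Fin n), IsMinimal Γ A ∧ i ∈ A

noncomputable section

/-- Combine an assignment on `A` and one on `Aᶜ` into a full bit string. -/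
def glue {m : ℕ} (A : Finset (Fin m)) (u : {x // x ∈ A} → Fin 2)
    (w : {x // x ∈ Aᶜ} → Fin 2) : Fin m → Fin 2 :=
  fun x => if h : x ∈ A then u ⟨x, h⟩ else w ⟨x, Finset.mem_compl.mpr h⟩

/-- Reduced density matrix of the pure state `ψ` on the qubit positions in `A`:
the partial trace over the positions outside `A` of `ψψ†`. -/
def reducedDensity {m : ℕ} (ψ : (Fin m → Fin 2) → ℂ) (A : Finset (Fin m)) :
    Matrix ({x // x ∈ A} → Fin 2) ({x // x ∈ A} → Fin 2) ℂ :=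
  fun u v => ∑ w : {x // x ∈ Aᶜ} → Fin 2,
    ψ (glue A u w) * (starRingEnd ℂ) (ψ (glue A v w))

/-- The reduction of `ψ` to `A` is maximally mixed, i.e. equals `2^{-|A|} · I`. -/
def MaximallyMixed {m : ℕ} (ψ : (Fin m → Fin 2) → ℂ) (A : Finset (Fin m)) : Prop :=
  reducedDensity ψ A =
    ((2 : ℂ) ^ A.card)⁻¹ •
      (1 : Matrix ({x // x ∈ A} → Fin 2) ({x // x ∈ A} → Fin 2) ℂ)

open Classical in
/-- Von Neumann entropy (natural logarithm): sum of `-λ log λ` over the eigenvalues. -/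
def vnEntropy {ι : Type} [Fintype ι] [DecidableEq ι] (ρ : Matrix ι ι ℂ) : ℝ :=
  if h : ρ.IsHermitian then ∑ i, Real.negMulLog (h.eigenvalues i) else 0

/-- Entropy of the reduction of `ψ` to the set `A` of qubit positions. -/
def Sent {m : ℕ} (ψ : (Fin m → Fin 2) → ℂ) (A : Finset (Fin m)) : ℝ :=
  vnEntropy (reducedDensity ψ A)

/-- The qubit positions (in `{0,1,…,n} = Fin (n+1)`, where `0` is the reference qubit)
of a set of players `A ⊆ Fin n`: player `i` holds position `i.succ`. -/
def posOf {n : ℕ} (A : Finset (Fin n)) : Finset (Fin (n + 1)) := A.image Fin.succ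

/-- `ψ` is a pure QSS state for the access structure `Γ`: a normalized pure state of
`n+1` qubits (position `0` being the reference qubit `R`) satisfying Recoverability
`S(R) + S(A) - S(R ∪ A) = 2 log 2` for authorized `A` and Secrecy
`S(R) + S(B) - S(R ∪ B) = 0` for unauthorized `B`. -/
structure IsPureQSSState {n : ℕ} (Γ : Finset (Fin n) → Prop)
    (ψ : (Fin (n + 1) → Fin 2) → ℂ) : Prop where
  normalized : ∑ x : Fin (n + 1) → Fin 2, ‖ψ x‖ ^ 2 = 1
  recover : ∀ A : Finset (Fin n), Γ A →
    Sent ψ {0} + Sent ψ (posOf A) - Sent ψ (insert 0 (posOf A)) = 2 * Real.log 2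
  secrecy : ∀ B : Finset (Fin n), ¬ Γ B →
    Sent ψ {0} + Sent ψ (posOf B) - Sent ψ (insert 0 (posOf B)) = 0

end

open scoped ComplexOrder

open Matrix in
lemma vn_charpoly {ι : Type} [Fintype ι] [DecidableEq ι] (ρ : Matrix ι ι ℂ) (h : ρ.IsHermitian) :
    vnEntropy ρ = (ρ.charpoly.roots.map (fun z : ℂ => Real.negMulLog z.re)).sum := by
  unfold vnEntropy
  rw [dif_pos h, h.roots_charpoly_eq_eigenvalues, Multiset.map_map]
  rfl

open Matrix Polynomial in
lemma vn_mul_comm {ι κ : Type} [Fintype ι] [DecidableEq ι] [Fintype κ] [DecidableEq κ]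
    (M : Matrix ι κ ℂ) : vnEntropy (M * Mᴴ) = vnEntropy (Mᴴ * M) := by
  rw [vn_charpoly _ (isHermitian_mul_conjTranspose_self M),
    vn_charpoly _ (isHermitian_conjTranspose_mul_self M)]
  have h := congrArg Polynomial.roots (charpoly_mul_comm' M Mᴴ)
  rw [roots_mul (mul_ne_zero (pow_ne_zero _ X_ne_zero) (charpoly_monic _).ne_zero),
    roots_mul (mul_ne_zero (pow_ne_zero _ X_ne_zero) (charpoly_monic _).ne_zero)] at h
  have h2 := congrArg (fun s : Multiset ℂ => (s.map (fun z : ℂ => Real.negMulLog z.re)).sum) h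
  simpa [Multiset.map_nsmul, Multiset.sum_nsmul] using h2

open Matrix in
lemma vn_transpose {ι : Type} [Fintype ι] [DecidableEq ι] (ρ : Matrix ι ι ℂ) (h : ρ.IsHermitian) :
    vnEntropy ρᵀ = vnEntropy ρ := by
  rw [vn_charpoly _ h, vn_charpoly _ h.transpose, charpoly_transpose]

open Matrix in
lemma vn_submatrix {ι κ : Type} [Fintype ι] [DecidableEq ι] [Fintype κ] [DecidableEq κ]
    (ρ : Matrix ι ι ℂ) (h : ρ.IsHermitian) (e : κ ≃ ι) :
    vnEntropy (ρ.submatrix e e) = vnEntropy ρ := by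
  rw [vn_charpoly _ h, vn_charpoly _ (h.submatrix e)]
  have := charpoly_reindex e.symm ρ
  simp only [reindex_apply, Equiv.symm_symm] at this
  rw [this]

open Matrix in
lemma vn_unitary {ι : Type} [Fintype ι] [DecidableEq ι] (ρ : Matrix ι ι ℂ) (h : ρ.IsHermitian)
    (V : Matrix ι ι ℂ) (hV : V * Vᴴ = 1) :
    vnEntropy (Vᴴ * ρ * V) = vnEntropy ρ := by
  rw [vn_charpoly _ h, vn_charpoly _ (isHermitian_conjTranspose_mul_mul V h)]
  rw [charpoly_mul_comm, ← mul_assoc, hV, one_mul]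

open Matrix in
lemma diag_bound {ι : Type} [Fintype ι] [DecidableEq ι] (ρ : Matrix ι ι ℂ) (h : ρ.PosSemidef) :
    vnEntropy ρ ≤ ∑ j, Real.negMulLog (ρ j j).re ∧
    (vnEntropy ρ = ∑ j, Real.negMulLog (ρ j j).re → ∀ j l, j ≠ l → ρ j l = 0) := by
  have hH := h.isHermitian
  set W : Matrix ι ι ℂ := (hH.eigenvectorUnitary : Matrix ι ι ℂ) with hW
  have hWW : W * Wᴴ = 1 := Unitary.coe_mul_star_self hH.eigenvectorUnitary
  have hWW' : Wᴴ * W = 1 := Unitary.coe_star_mul_self hH.eigenvectorUnitary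
  set lam := hH.eigenvalues with hlam
  have hl0 : ∀ k, 0 ≤ lam k := h.eigenvalues_nonneg
  have hsp : ∀ j l, ρ j l = ∑ k, W j k * lam k * star (W l k) := by
    intro j l
    have := hH.spectral_theorem
    rw [Unitary.conjStarAlgAut_apply] at this
    have h2 := congrFun (congrFun this j) l
    rw [h2, mul_apply]
    refine Finset.sum_congr rfl fun k _ => ?_
    rw [mul_diagonal]
    rfl
  have hrow : ∀ j l, ∑ k, W j k * star (W l k) = (1 : Matrix ι ι ℂ) j l := by
    intro j l
    rw [← hWW, mul_apply]; rfl
  have hcol : ∀ j l, ∑ k, star (W k j) * W k l = (1 : Matrix ι ι ℂ) j l := by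
    intro j l
    rw [← hWW', mul_apply]; rfl
  have hre : ∀ z : ℂ, z * star z = ((‖z‖ ^ 2 : ℝ) : ℂ) := by
    intro z
    rw [show star z = (starRingEnd ℂ) z from rfl, Complex.mul_conj, Complex.normSq_eq_norm_sq]
  have hrow1 : ∀ j, ∑ k, ‖W j k‖ ^ 2 = 1 := by
    intro j
    have := hrow j j
    simp only [hre, one_apply_eq] at this
    exact_mod_cast this
  have hcol1 : ∀ j, ∑ k, ‖W k j‖ ^ 2 = 1 := by
    intro j
    have := hcol j j
    simp only [mul_comm (star _), hre, one_apply_eq] at this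
    exact_mod_cast this
  have hdiag : ∀ j, ρ j j = ((∑ k, ‖W j k‖ ^ 2 • lam k : ℝ) : ℂ) := by
    intro j
    rw [hsp, Complex.ofReal_sum]
    refine Finset.sum_congr rfl fun k _ => ?_
    rw [mul_right_comm, hre]; simp
  have hdiagre : ∀ j, (ρ j j).re = ∑ k, ‖W j k‖ ^ 2 • lam k := by
    intro j; rw [hdiag, Complex.ofReal_re]
  have hS : vnEntropy ρ = ∑ j, ∑ k, ‖W j k‖ ^ 2 • Real.negMulLog (lam k) := by
    rw [Finset.sum_comm]
    unfold vnEntropy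
    rw [dif_pos hH]
    refine Finset.sum_congr rfl fun k _ => ?_
    rw [← Finset.sum_smul, hcol1, one_smul]
  have hJ : ∀ j ∈ Finset.univ, ∑ k, ‖W j k‖ ^ 2 • Real.negMulLog (lam k) ≤
      Real.negMulLog (ρ j j).re := by
    intro j _
    rw [hdiagre]
    exact Real.concaveOn_negMulLog.le_map_sum (fun i _ => by positivity) (hrow1 j)
      (fun i _ => hl0 i)
  refine ⟨by rw [hS]; exact Finset.sum_le_sum hJ, fun heq j l hjl => ?_⟩
  rw [hS] at heq
  have hj := (Finset.sum_eq_sum_iff_of_le hJ).1 heq j (Finset.mem_univ j)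
  rw [hdiagre] at hj
  have hk := (Real.strictConcaveOn_negMulLog.map_sum_eq_iff' (fun i _ => by positivity) (hrow1 j)
      (fun i _ => hl0 i)).1 hj.symm
  rw [hsp]
  have : ∑ k, W j k * lam k * star (W l k) = ∑ k, ((ρ j j).re : ℂ) * (W j k * star (W l k)) := by
    refine Finset.sum_congr rfl fun k _ => ?_
    by_cases h0 : W j k = 0
    · simp [h0]
    · rw [hdiagre, ← hk k (Finset.mem_univ k) (by simpa using h0)]; ring
  rw [this, ← Finset.mul_sum, hrow, one_apply_ne hjl, mul_zero]

lemma scalar_bound (a b : ℝ) (ha : 0 ≤ a) (hb : 0 ≤ b) :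
    Real.negMulLog a + Real.negMulLog b ≤ Real.negMulLog (a + b) + (a + b) * Real.log 2 ∧
    (Real.negMulLog a + Real.negMulLog b = Real.negMulLog (a + b) + (a + b) * Real.log 2 →
      a = b) := by
  have hhalf : 2 * Real.negMulLog ((1/2 : ℝ) • a + (1/2 : ℝ) • b) =
      Real.negMulLog (a + b) + (a + b) * Real.log 2 := by
    have : (1/2 : ℝ) • a + (1/2 : ℝ) • b = (a + b) * (1/2) := by simp; ring
    rw [this, Real.negMulLog_mul]
    have : Real.negMulLog (1/2) = 1/2 * Real.log 2 := by
      simp [Real.negMulLog]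
    rw [this]; ring
  rw [← hhalf]
  by_cases hab : a = b
  · subst hab
    refine ⟨?_, fun _ => rfl⟩
    rw [← add_smul]; norm_num; linarith
  · have := Real.strictConcaveOn_negMulLog.2 (show a ∈ Set.Ici 0 from ha) (show b ∈ Set.Ici 0 from hb) hab
      (show (0:ℝ) < 1/2 by norm_num) (show (0:ℝ) < 1/2 by norm_num) (by norm_num)
    simp only [smul_eq_mul] at this ⊢
    exact ⟨by linarith, fun h => by linarith⟩

open Matrix in
lemma sub_additive_aux {ι : Type} [Fintype ι] [DecidableEq ι] (M : Matrix (ι × Fin 2) (ι × Fin 2) ℂ)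
    (hM : M.PosSemidef) (htr : M.trace = 1) (N : Matrix ι ι ℂ)
    (hN : ∀ u v, N u v = ∑ e, M (u, e) (v, e)) :
    vnEntropy M ≤ vnEntropy N + Real.log 2 ∧
    (vnEntropy M = vnEntropy N + Real.log 2 →
      ∀ u v e e', M (u, e) (v, e') = if e = e' then N u v / 2 else 0) := by
  have hNH : N.IsHermitian := by
    ext u v
    rw [conjTranspose_apply, hN, hN, star_sum]
    exact Finset.sum_congr rfl fun e _ => hM.isHermitian.apply _ _
  set U : Matrix ι ι ℂ := (hNH.eigenvectorUnitary : Matrix ι ι ℂ) with hU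
  have hUU : U * Uᴴ = 1 := Unitary.coe_mul_star_self hNH.eigenvectorUnitary
  set lam := hNH.eigenvalues with hlam
  have hdN : Uᴴ * N * U = diagonal (fun k => (lam k : ℂ)) := by
    have := hNH.conjStarAlgAut_star_eigenvectorUnitary
    rw [Unitary.conjStarAlgAut_star_apply] at this
    exact this
  have hspN : N = U * diagonal (fun k => (lam k : ℂ)) * Uᴴ := by
    rw [← hdN, ← mul_assoc, ← mul_assoc, hUU, one_mul, mul_assoc, hUU, mul_one]
  set V : Matrix (ι × Fin 2) (ι × Fin 2) ℂ := kroneckerMap (· * ·) U 1 with hV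
  have hVH : Vᴴ = kroneckerMap (· * ·) Uᴴ 1 := by
    rw [hV, conjTranspose_kronecker, conjTranspose_one]
  have hVV : V * Vᴴ = 1 := by
    rw [hVH, hV, ← mul_kronecker_mul, hUU, one_mul, one_kronecker_one]
  have hM' : (Vᴴ * M * V).PosSemidef := hM.conjTranspose_mul_mul_same V
  set M' := Vᴴ * M * V with hM'def
  have hS : vnEntropy M' = vnEntropy M := vn_unitary M hM.isHermitian V hVV
  have hent : ∀ k e l e', M' (k, e) (l, e') = ∑ v, (∑ u, Uᴴ k u * M (u, e) (v, e')) * U v l := by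
    intro k e l e'
    rw [hM'def, hVH, hV]
    simp [mul_apply, Fintype.sum_prod_type, kroneckerMap_apply, one_apply]
  have hsum : ∀ k, M' (k, 0) (k, 0) + M' (k, 1) (k, 1) = lam k := by
    intro k
    have := congrFun (congrFun hdN k) k
    rw [diagonal_apply_eq] at this
    rw [← this, hent, hent, ← Finset.sum_add_distrib, mul_apply]
    refine Finset.sum_congr rfl fun v _ => ?_
    rw [← add_mul, ← Finset.sum_add_distrib, mul_apply]
    congr 1
    refine Finset.sum_congr rfl fun u _ => ?_
    rw [hN, Fin.sum_univ_two]; ring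
  have hsumre : ∀ k, (M' (k, 0) (k, 0)).re + (M' (k, 1) (k, 1)).re = lam k := by
    intro k
    rw [← Complex.add_re, hsum, Complex.ofReal_re]
  have hpos : ∀ x, 0 ≤ (M' x x).re := fun x => (Complex.le_def.1 (hM'.diag_nonneg (i := x))).1
  have hlam1 : ∑ k, lam k = 1 := by
    have h1 : N.trace = 1 := by
      rw [← htr]; simp only [trace, diag_apply, hN, Fintype.sum_prod_type]
    rw [hNH.trace_eq_sum_eigenvalues] at h1
    apply Complex.ofReal_injective
    rw [Complex.ofReal_sum]
    exact h1
  have hR : vnEntropy N + Real.log 2 = ∑ k, (Real.negMulLog (lam k) + lam k * Real.log 2) := by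
    rw [Finset.sum_add_distrib, ← Finset.sum_mul, hlam1, one_mul]
    unfold vnEntropy
    rw [dif_pos hNH]
  have hterm : ∀ k ∈ Finset.univ, Real.negMulLog (M' (k, 0) (k, 0)).re +
      Real.negMulLog (M' (k, 1) (k, 1)).re ≤ Real.negMulLog (lam k) + lam k * Real.log 2 := by
    intro k _
    rw [← hsumre k]
    exact (scalar_bound _ _ (hpos _) (hpos _)).1
  obtain ⟨hb1, hb2⟩ := diag_bound M' hM'
  rw [hS, Fintype.sum_prod_type] at hb1 hb2
  simp only [Fin.sum_univ_two] at hb1 hb2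
  have hle := Finset.sum_le_sum hterm
  rw [hR]
  refine ⟨hb1.trans hle, fun heq => ?_⟩
  have e1 := hb2 (le_antisymm hb1 (heq ▸ hle))
  have e2 := (Finset.sum_eq_sum_iff_of_le hterm).1 (le_antisymm hle (heq ▸ hb1))
  have e3 : M' = kroneckerMap (· * ·) (diagonal (fun k => (lam k : ℂ))) ((1/2 : ℂ) • 1) := by
    ext ⟨k, e⟩ ⟨l, e'⟩
    by_cases hne : (k, e) = (l, e')
    · obtain ⟨rfl, rfl⟩ := Prod.mk.inj hne
      have hk := e2 k (Finset.mem_univ k)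
      rw [← hsumre k] at hk
      have hk2 := (scalar_bound _ _ (hpos _) (hpos _)).2 hk
      have him : ∀ x, M' x x = ((M' x x).re : ℂ) := fun x =>
        (hM'.isHermitian.coe_re_apply_self x).symm
      have hk3 := hsumre k
      have : (M' (k, e) (k, e)).re = lam k / 2 := by
        fin_cases e
        · show (M' (k, 0) (k, 0)).re = _
          linarith
        · show (M' (k, 1) (k, 1)).re = _
          linarith
      rw [him, this]
      simp [kroneckerMap_apply]; ring
    · rw [e1 _ _ hne]
      simp only [kroneckerMap_apply, diagonal_apply, Matrix.smul_apply, one_apply]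
      by_cases hkl : k = l
      · subst hkl
        have : e ≠ e' := fun h => hne (by rw [h])
        simp [this]
      · simp [hkl]
  have e4 : M = kroneckerMap (· * ·) N ((1/2 : ℂ) • 1) := by
    have : M = V * M' * Vᴴ := by
      rw [hM'def, ← mul_assoc, ← mul_assoc, hVV, one_mul, mul_assoc, hVV, mul_one]
    rw [this, e3, hVH, hV, ← mul_kronecker_mul, ← mul_kronecker_mul, ← hspN]
    simp
  intro u v e e'
  rw [e4]
  simp only [kroneckerMap_apply, Matrix.smul_apply, one_apply]
  split_ifs
  · simp; ring
  · simp

lemma glue_sum {m : ℕ} {β : Type*} [AddCommMonoid β] (A : Finset (Fin m))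
    (f : (Fin m → Fin 2) → β) :
    ∑ u : {x // x ∈ A} → Fin 2, ∑ w : {x // x ∈ Aᶜ} → Fin 2, f (glue A u w) = ∑ x, f x := by
  rw [← Fintype.sum_prod_type']
  refine Finset.sum_bij' (fun p _ => glue A p.1 p.2) (fun x _ => (fun a => x a.1, fun a => x a.1))
    (by simp) (by simp) ?_ ?_ (by simp)
  · rintro ⟨u, w⟩ _
    refine Prod.ext ?_ ?_
    · funext a; simp [glue]
    · funext a
      have := Finset.mem_compl.1 a.2
      simp [glue, this]
  · intro x _
    funext a; simp [glue]

open Matrix in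
lemma rd_eq {m : ℕ} (ψ : (Fin m → Fin 2) → ℂ) (A : Finset (Fin m)) :
    reducedDensity ψ A = (Matrix.of fun u w => ψ (glue A u w)) *
      (Matrix.of fun u w => ψ (glue A u w))ᴴ := by
  ext u v
  simp [reducedDensity, mul_apply]

open Matrix in
lemma rd_psd {m : ℕ} (ψ : (Fin m → Fin 2) → ℂ) (A : Finset (Fin m)) :
    (reducedDensity ψ A).PosSemidef := by
  rw [rd_eq]; exact posSemidef_self_mul_conjTranspose _

open Matrix in
lemma rd_trace {m : ℕ} (ψ : (Fin m → Fin 2) → ℂ) (A : Finset (Fin m))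
    (h : ∑ x, ‖ψ x‖ ^ 2 = 1) : (reducedDensity ψ A).trace = 1 := by
  have h1 : (reducedDensity ψ A).trace = ∑ x, ψ x * (starRingEnd ℂ) (ψ x) := by
    rw [← glue_sum A]; rfl
  rw [h1]
  simp only [Complex.mul_conj, Complex.normSq_eq_norm_sq]
  exact_mod_cast h

open Matrix in
lemma sent_compl {m : ℕ} (ψ : (Fin m → Fin 2) → ℂ) (A : Finset (Fin m)) :
    Sent ψ Aᶜ = Sent ψ A := by
  unfold Sent
  rw [rd_eq ψ A, vn_mul_comm, ← vn_transpose _ (isHermitian_conjTranspose_mul_self _)]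
  congr 1
  ext w w'
  simp only [reducedDensity, transpose_apply, mul_apply, conjTranspose_apply, of_apply]
  have key : ∀ (u : {x // x ∈ Aᶜᶜ} → Fin 2) (w : {x // x ∈ Aᶜ} → Fin 2),
      glue Aᶜ w u = glue A (fun a => u ⟨a.1, by simp⟩) w := by
    intro u w
    funext x
    by_cases hx : x ∈ A <;> simp [glue, hx]
  refine Finset.sum_bij' (fun u _ => fun a => u ⟨a.1, by simp⟩)
    (fun u _ => fun a => u ⟨a.1, by simpa using a.2⟩)
    (by simp) (by simp) (by simp) (by simp) ?_
  intro u _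
  rw [key, key, mul_comm]; rfl

def extEquiv {m : ℕ} (Y : Finset (Fin m)) (i : Fin m) (hi : i ∉ Y) :
    (({x // x ∈ Y} → Fin 2) × Fin 2) ≃ ({x // x ∈ insert i Y} → Fin 2) where
  toFun p := fun x => if h : x.1 ∈ Y then p.1 ⟨x.1, h⟩ else p.2
  invFun f := (fun x => f ⟨x.1, Finset.mem_insert_of_mem x.2⟩, f ⟨i, Finset.mem_insert_self i Y⟩)
  left_inv := by
    rintro ⟨u, e⟩
    simp [hi]
  right_inv := by
    intro f
    funext ⟨x, hx⟩
    by_cases h : x ∈ Y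
    · simp [h]
    · have : x = i := by simpa [h] using hx
      subst this
      simp [h]

lemma ptrace {m : ℕ} (ψ : (Fin m → Fin 2) → ℂ) (Y : Finset (Fin m)) (i : Fin m) (hi : i ∉ Y)
    (u v : {x // x ∈ Y} → Fin 2) :
    reducedDensity ψ Y u v =
      ∑ e, reducedDensity ψ (insert i Y) (extEquiv Y i hi (u, e)) (extEquiv Y i hi (v, e)) := by
  unfold reducedDensity
  rw [← Fintype.sum_prod_type' (f := fun e w => ψ (glue (insert i Y) (extEquiv Y i hi (u, e)) w) *
    (starRingEnd ℂ) (ψ (glue (insert i Y) (extEquiv Y i hi (v, e)) w)))]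
  have key : ∀ (u : {x // x ∈ Y} → Fin 2) (w : {x // x ∈ Yᶜ} → Fin 2),
      glue (insert i Y) (extEquiv Y i hi (u, w ⟨i, by simpa using hi⟩))
        (fun a => w ⟨a.1, by have := a.2; simp at this; simp [this]⟩) = glue Y u w := by
    intro u w
    funext x
    by_cases hx : x ∈ Y
    · simp [glue, hx, extEquiv]
    · by_cases hxi : x = i
      · subst hxi; simp [glue, hx, extEquiv]
      · simp [glue, hx, hxi]
  refine Finset.sum_bij' (fun w _ => (w ⟨i, by simpa using hi⟩,
      fun a => w ⟨a.1, by have := a.2; simp at this; simp [this]⟩))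
    (fun p _ => fun a => if h : a.1 = i then p.1 else
      p.2 ⟨a.1, by have := a.2; simp at this; simp [this, h]⟩) (by simp) (by simp) ?_ ?_ ?_
  · intro w _
    funext ⟨a, ha⟩
    by_cases h : a = i
    · subst h; simp
    · simp [h]
  · rintro ⟨e, w⟩ _
    refine Prod.ext (by simp) ?_
    funext ⟨a, ha⟩
    have : a ≠ i := by rintro rfl; simp at ha
    simp [this]
  · intro w _
    simp only [key]

lemma sent_insert {m : ℕ} (ψ : (Fin m → Fin 2) → ℂ) (hψ : ∑ x, ‖ψ x‖ ^ 2 = 1)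
    (Y : Finset (Fin m)) (i : Fin m) (hi : i ∉ Y) :
    Sent ψ (insert i Y) ≤ Sent ψ Y + Real.log 2 ∧
    (Sent ψ (insert i Y) = Sent ψ Y + Real.log 2 → ∀ u v e e',
      reducedDensity ψ (insert i Y) (extEquiv Y i hi (u, e)) (extEquiv Y i hi (v, e')) =
        if e = e' then reducedDensity ψ Y u v / 2 else 0) := by
  have hp := (rd_psd ψ (insert i Y))
  have h := sub_additive_aux ((reducedDensity ψ (insert i Y)).submatrix (extEquiv Y i hi)
    (extEquiv Y i hi)) (hp.submatrix _) (by
      rw [← rd_trace ψ (insert i Y) hψ]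
      exact Equiv.sum_comp (extEquiv Y i hi) (fun x => reducedDensity ψ (insert i Y) x x))
    (reducedDensity ψ Y) (fun u v => ptrace ψ Y i hi u v)
  rw [vn_submatrix _ hp.isHermitian] at h
  exact h

lemma mm_down {m : ℕ} (ψ : (Fin m → Fin 2) → ℂ) (Y : Finset (Fin m)) (i : Fin m) (hi : i ∉ Y)
    (h : MaximallyMixed ψ (insert i Y)) : MaximallyMixed ψ Y := by
  unfold MaximallyMixed at *
  ext u v
  rw [ptrace ψ Y i hi, h]
  simp only [Matrix.smul_apply, Matrix.one_apply, EmbeddingLike.apply_eq_iff_eq, Prod.mk.injEq,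
    and_true, Finset.card_insert_of_notMem hi]
  split_ifs
  · simp [pow_succ]
  · simp

lemma mm_subset {m : ℕ} (ψ : (Fin m → Fin 2) → ℂ) (A B : Finset (Fin m)) (hBA : B ⊆ A)
    (h : MaximallyMixed ψ A) : MaximallyMixed ψ B := by
  induction hk : (A \ B).card generalizing B with
  | zero =>
    have : A ⊆ B := by simpa [Finset.sdiff_eq_empty_iff_subset] using hk
    rwa [Finset.Subset.antisymm hBA this]
  | succ k ih =>
    obtain ⟨i, hi⟩ : (A \ B).Nonempty := Finset.card_pos.1 (by omega)
    have hi' := Finset.mem_sdiff.1 hi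
    refine mm_down ψ B i hi'.2 (ih _ (Finset.insert_subset hi'.1 hBA) ?_)
    have h3 : A \ insert i B = (A \ B).erase i := by
      ext x; simp only [Finset.mem_sdiff, Finset.mem_insert, Finset.mem_erase]; tauto
    rw [h3, Finset.card_erase_of_mem hi, hk]; rfl

open Matrix in
lemma mm_entropy {m : ℕ} (ψ : (Fin m → Fin 2) → ℂ) (A : Finset (Fin m))
    (h : MaximallyMixed ψ A) : Sent ψ A = A.card * Real.log 2 := by
  have hH := (rd_psd ψ A).isHermitian
  have hc : (reducedDensity ψ A) = diagonal (fun _ => ((2 : ℂ) ^ A.card)⁻¹) := by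
    rw [h, smul_one_eq_diagonal]
  unfold Sent
  rw [vn_charpoly _ hH, hc, charpoly_diagonal, Finset.prod_const, Polynomial.roots_pow,
    Polynomial.roots_X_sub_C]
  have h2 : (((2 : ℂ) ^ A.card)⁻¹).re = ((2 : ℝ) ^ A.card)⁻¹ := by
    rw [← Complex.ofReal_re (((2 : ℝ) ^ A.card)⁻¹)]; push_cast; rfl
  simp only [Multiset.map_nsmul, Multiset.sum_nsmul, Multiset.map_singleton,
    Multiset.sum_singleton, h2]
  simp [Real.negMulLog]

lemma mm_of_all {m : ℕ} (ψ : (Fin m → Fin 2) → ℂ) (hψ : ∑ x, ‖ψ x‖ ^ 2 = 1) (A : Finset (Fin m))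
    (h : ∀ i ∈ A, Sent ψ A = Sent ψ (A.erase i) + Real.log 2) : MaximallyMixed ψ A := by
  have step : ∀ i (hi : i ∈ A) (u v : {x // x ∈ A} → Fin 2),
      (u ⟨i, hi⟩ ≠ v ⟨i, hi⟩ → reducedDensity ψ A u v = 0) ∧
      (∀ c, reducedDensity ψ A (Function.update u ⟨i, hi⟩ c) (Function.update u ⟨i, hi⟩ c) =
        reducedDensity ψ A u u) := by
    intro i hi
    have hi' : i ∉ A.erase i := by simp
    have hA : insert i (A.erase i) = A := Finset.insert_erase hi
    have h1 := h i hi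
    generalize A.erase i = Y at *
    subst hA
    have h2 := (sent_insert ψ hψ Y i hi').2 h1
    intro u v
    obtain ⟨⟨u', e⟩, rfl⟩ := (extEquiv Y i hi').surjective u
    obtain ⟨⟨v', e'⟩, rfl⟩ := (extEquiv Y i hi').surjective v
    constructor
    · intro hne
      rw [h2, if_neg]
      simpa [extEquiv, hi'] using hne
    · intro c
      have : Function.update (extEquiv Y i hi' (u', e)) ⟨i, hi⟩ c = extEquiv Y i hi' (u', c) := by
        funext ⟨x, hx⟩
        by_cases hxi : x = i
        · subst hxi; simp [extEquiv, hi']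
        · have : x ∈ Y := by simpa [hxi] using hx
          simp [extEquiv, this, Function.update, hxi]
      rw [this, h2, h2, if_pos rfl, if_pos rfl]
  have hconst : ∀ u v : {x // x ∈ A} → Fin 2, reducedDensity ψ A u u = reducedDensity ψ A v v := by
    intro u v
    have : ∀ s : Finset {x // x ∈ A}, reducedDensity ψ A (s.piecewise v u) (s.piecewise v u) =
        reducedDensity ψ A u u := by
      intro s
      induction s using Finset.induction_on with
      | empty => simp
      | insert a s ha ih =>
        rw [Finset.piecewise_insert, (step a.1 a.2 _ 0).2, ih]
    rw [← this Finset.univ, Finset.piecewise_univ]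
  have htr := rd_trace ψ A hψ
  ext u v
  by_cases huv : u = v
  · subst huv
    have : (reducedDensity ψ A).trace = (2 : ℂ) ^ A.card * reducedDensity ψ A u u := by
      unfold Matrix.trace
      simp only [Matrix.diag_apply]
      rw [Finset.sum_congr rfl (fun x _ => hconst x u)]
      simp
    rw [this] at htr
    simp only [Matrix.smul_apply, Matrix.one_apply_eq, smul_eq_mul, mul_one]
    exact eq_inv_of_mul_eq_one_right htr
  · obtain ⟨a, ha⟩ := Function.ne_iff.1 huv
    rw [(step a.1 a.2 u v).1 ha]
    simp [Matrix.one_apply_ne huv]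

theorem stmt16 (n : ℕ) (hn : 3 ≤ n) (Γ : Finset (Fin n) → Prop)
    (hmono : Monotonic Γ) (hnc : NoCloning Γ) (hnr : NoRedundancy Γ)
    (ψ : (Fin (n + 1) → Fin 2) → ℂ) (hψ : IsPureQSSState Γ ψ) :
    ∀ A : Finset (Fin n), IsMinimal Γ A → ∀ B : Finset (Fin n), B ⊆ A →
      Sent ψ (posOf B) = (B.card : ℝ) * Real.log 2 ∧ MaximallyMixed ψ (posOf B) := by
  intro A hA B hBA
  have hmm : MaximallyMixed ψ (posOf A) := by
    apply mm_of_all ψ hψ.normalized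
    intro p hp
    obtain ⟨i, hi, rfl⟩ := Finset.mem_image.1 hp
    have hr := hψ.recover A hA.1
    have hs := hψ.secrecy (A.erase i) (hA.2 _ (Finset.erase_ssubset hi))
    have he : posOf (A.erase i) = (posOf A).erase i.succ := by
      unfold posOf
      rw [Finset.image_erase (Fin.succ_injective n)]
    rw [he] at hs
    have h1 := (sent_insert ψ hψ.normalized ((posOf A).erase i.succ) i.succ (by simp)).1
    rw [Finset.insert_erase hp] at h1
    have h2 := (sent_insert ψ hψ.normalized (insert 0 (posOf A))ᶜ i.succ (by simp [hp])).1
    have h3 : insert i.succ (insert 0 (posOf A))ᶜ = (insert 0 ((posOf A).erase i.succ))ᶜ := by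
      ext x
      have := Fin.succ_ne_zero i
      simp only [Finset.mem_insert, Finset.mem_compl, Finset.mem_erase]
      by_cases hx : x = i.succ
      · subst hx; simp [this]
      · simp [hx]
    rw [h3, sent_compl, sent_compl] at h2
    linarith
  have hB := mm_subset ψ _ (posOf B) (Finset.image_subset_image hBA) hmm
  refine ⟨?_, hB⟩
  rw [mm_entropy ψ _ hB]
  unfold posOf
  rw [Finset.card_image_of_injective _ (Fin.succ_injective n)]
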